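/- arXiv:1903.05270 — 2 statements merged into one kernel-verified Lean document; each statement's English description precedes it below -/
import Mathlib

section
/- For m ≥ 2 and real x > 1/2, the moment identity (π/2) ∫_{-∞}^{∞} sech²(πw) (x + iw - 1/2)^{-m} dw = (-1)^{m-1} ψ^{(m)}(x)/(m-1)!, where ψ^{(m)} is the m-th polygamma function; in particular at x = 1 this equals m·ζ(m+1). -/
open MeasureTheory Real

/-- The `m`-th polygamma function `ψ^{(m)}(x)`, the `(m+1)`-st derivative of `log Γ`. -/
noncomputable def polygamma (m : ℕ) (x : ℝ) : ℝ :=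
  iteratedDeriv (m + 1) (fun y => Real.log (Real.Gamma y)) x

/-!
Writing `1 / (a + iw) ^ (k + 1)` as a Laplace integral turns a negative moment of a density into the
Laplace transform of its Fourier transform. For `(π / 2) sech² (πw)` the logistic substitution
`u = 1 / (1 + exp (-2πw))` makes the Fourier transform a Beta integral, so by the reflection formula
it equals `t exp (-t / 2) / (1 - exp (-t))`. Expanding `1 / (1 - exp (-t))` geometrically gives
`m ∑ 1 / (x + n) ^ (m + 1)`, which is also what comes out of differentiating the logarithm of
Euler's product for `Γ` term by term.
-/

section LaplaceTransform

open Set Filter Topology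

lemma norm_pow_mul_cexp_neg_mul (k : ℕ) (z : ℂ) {t : ℝ} (ht : 0 ≤ t) :
    ‖(t : ℂ) ^ k * Complex.exp (-(z * t))‖ = t ^ k * Real.exp (-(z.re * t)) := by
  rw [norm_mul, norm_pow, Complex.norm_real, Real.norm_of_nonneg ht, Complex.norm_exp,
    Complex.neg_re, Complex.re_mul_ofReal]

lemma integrableOn_pow_mul_exp_neg_mul (k : ℕ) {r : ℝ} (hr : 0 < r) :
    IntegrableOn (fun t : ℝ => t ^ k * Real.exp (-(r * t))) (Ioi 0) := by
  have hk : (-1 : ℝ) < k := by linarith [k.cast_nonneg (α := ℝ)]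
  simpa only [rpow_natCast, rpow_one, neg_mul] using
    integrableOn_rpow_mul_exp_neg_mul_rpow hk one_pos hr

lemma integrableOn_pow_mul_cexp_neg_mul (k : ℕ) {z : ℂ} (hz : 0 < z.re) :
    IntegrableOn (fun t : ℝ => (t : ℂ) ^ k * Complex.exp (-(z * t))) (Ioi 0) := by
  refine Integrable.mono' (integrableOn_pow_mul_exp_neg_mul k hz) (by fun_prop) ?_
  filter_upwards [ae_restrict_mem measurableSet_Ioi] with t ht
  exact (norm_pow_mul_cexp_neg_mul k z (mem_Ioi.1 ht).le).le

lemma tendsto_pow_mul_cexp_neg_mul_atTop (k : ℕ) {z : ℂ} (hz : 0 < z.re) :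
    Tendsto (fun t : ℝ => (t : ℂ) ^ k * Complex.exp (-(z * t))) atTop (𝓝 0) := by
  rw [tendsto_zero_iff_norm_tendsto_zero]
  refine (tendsto_rpow_mul_exp_neg_mul_atTop_nhds_zero k z.re hz).congr' ?_
  filter_upwards [eventually_ge_atTop 0] with t ht
  rw [norm_pow_mul_cexp_neg_mul k z ht, rpow_natCast, neg_mul]

lemma hasDerivAt_pow_succ_mul_cexp_neg_mul (k : ℕ) (z : ℂ) (t : ℝ) :
    HasDerivAt (fun t : ℝ => (t : ℂ) ^ (k + 1) * Complex.exp (-(z * t)))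
      ((k + 1) * ((t : ℂ) ^ k * Complex.exp (-(z * t))) -
        z * ((t : ℂ) ^ (k + 1) * Complex.exp (-(z * t)))) t := by
  have hexp : HasDerivAt (fun t : ℂ => Complex.exp (-(z * t))) (Complex.exp (-(z * t)) * -z) t :=
    ((hasDerivAt_const_mul z).fun_neg).cexp
  refine HasDerivAt.comp_ofReal
    (e := fun t : ℂ => t ^ (k + 1) * Complex.exp (-(z * t)))
    (((hasDerivAt_pow (k + 1) (t : ℂ)).mul hexp).congr_deriv ?_)
  simp only [Nat.cast_add, Nat.cast_one, Nat.add_sub_cancel]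
  ring

lemma integral_pow_mul_cexp_neg_mul_Ioi (k : ℕ) {z : ℂ} (hz : 0 < z.re) :
    ∫ t : ℝ in Ioi 0, (t : ℂ) ^ k * Complex.exp (-(z * t)) = k.factorial / z ^ (k + 1) := by
  have hz0 : z ≠ 0 := by rintro rfl; exact hz.false
  induction k with
  | zero =>
    have h := integral_exp_mul_complex_Ioi (a := -z) (by rwa [Complex.neg_re, neg_lt_zero]) 0
    simpa [neg_mul, neg_div_neg_eq] using h
  | succ k ih =>
    have hint := (integrableOn_pow_mul_cexp_neg_mul k hz).const_mul (k + 1 : ℂ)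
    have hint' := (integrableOn_pow_mul_cexp_neg_mul (k + 1) hz).const_mul z
    have hparts := integral_Ioi_of_hasDerivAt_of_tendsto' (a := (0 : ℝ))
      (fun t _ => hasDerivAt_pow_succ_mul_cexp_neg_mul k z t) (hint.sub hint')
      (tendsto_pow_mul_cexp_neg_mul_atTop (k + 1) hz)
    rw [integral_sub hint hint', integral_const_mul, integral_const_mul, ih, Complex.ofReal_zero,
      zero_pow k.succ_ne_zero, zero_mul, sub_zero, sub_eq_zero] at hparts
    rw [← mul_right_inj' hz0, ← hparts, Nat.factorial_succ]
    push_cast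
    field_simp
    ring

lemma integral_pow_mul_exp_neg_mul_Ioi (k : ℕ) {r : ℝ} (hr : 0 < r) :
    ∫ t : ℝ in Ioi 0, t ^ k * Real.exp (-(r * t)) = k.factorial / r ^ (k + 1) := by
  exact_mod_cast integral_pow_mul_cexp_neg_mul_Ioi k (z := r) (by rwa [Complex.ofReal_re])

lemma integral_div_pow_eq_integral_Ioi_fourier {ρ : ℝ → ℂ} (hρ : Integrable ρ) (k : ℕ) {a : ℂ}
    (ha : 0 < a.re) :
    k.factorial * ∫ w : ℝ, ρ w / (a + Complex.I * w) ^ (k + 1) =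
      ∫ t : ℝ in Ioi 0, (t : ℂ) ^ k * Complex.exp (-(a * t)) *
        ∫ w : ℝ, ρ w * Complex.exp (-(Complex.I * w * t)) := by
  have hlaplace (w : ℝ) : k.factorial * (ρ w / (a + Complex.I * w) ^ (k + 1)) =
      ∫ t : ℝ in Ioi 0, ρ w * ((t : ℂ) ^ k * Complex.exp (-(a * t))) *
        Complex.exp (-(Complex.I * w * t)) := by
    have hre : 0 < (a + Complex.I * w).re := by simpa using ha
    rw [mul_div_left_comm, ← integral_pow_mul_cexp_neg_mul_Ioi k hre, ← integral_const_mul]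
    simp only [add_mul, neg_add, Complex.exp_add, mul_assoc]
  have hint : Integrable (Function.uncurry fun w t : ℝ =>
      ρ w * ((t : ℂ) ^ k * Complex.exp (-(a * t))) * Complex.exp (-(Complex.I * w * t)))
      (volume.prod (volume.restrict (Ioi 0))) := by
    have hcont : Continuous fun p : ℝ × ℝ => Complex.exp (-(Complex.I * p.1 * p.2)) := by fun_prop
    refine (hρ.mul_prod (integrableOn_pow_mul_cexp_neg_mul k ha)).mul_bdd (c := 1)
      hcont.aestronglyMeasurable (ae_of_all _ fun p => ?_)
    simp [Complex.norm_exp]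
  rw [← integral_const_mul]
  simp_rw [hlaplace]
  rw [integral_integral_swap hint]
  simp_rw [← integral_const_mul]
  congr! 4
  ring

end LaplaceTransform

section SechSquared

open Set

/-- The probability density `(π/2) sech²(πw)` on the real line, the derivative of the logistic
function `Real.sigmoid (2 * π * w)`. -/
noncomputable def sechSqDensity (w : ℝ) : ℝ :=
  π / 2 * (1 / Real.cosh (π * w)) ^ 2

lemma hasDerivAt_sigmoid_two_pi_mul (w : ℝ) :
    HasDerivAt (fun w => sigmoid (2 * π * w)) (sechSqDensity w) w := by
  refine ((hasDerivAt_sigmoid (2 * π * w)).comp w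
    ((hasDerivAt_id w).const_mul (2 * π))).congr_deriv ?_
  have hexp : Real.exp (2 * π * w) = Real.exp (π * w) ^ 2 := by
    rw [← Real.exp_nat_mul, Nat.cast_ofNat, mul_assoc]
  rw [sechSqDensity, ← sigmoid_neg, sigmoid_def, sigmoid_def, Real.cosh_eq, neg_neg,
    Real.exp_neg, Real.exp_neg, hexp]
  field_simp
  ring

lemma monotone_sigmoid_two_pi_mul : Monotone fun w => sigmoid (2 * π * w) :=
  sigmoid_monotone.comp (monotone_id.const_mul two_pi_pos.le)

lemma range_sigmoid_two_pi_mul : range (fun w => sigmoid (2 * π * w)) = Ioo 0 1 := by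
  rw [← range_sigmoid]
  exact (mul_left_surjective₀ two_pi_pos.ne').range_comp sigmoid

lemma integrable_sechSqDensity : Integrable sechSqDensity := by
  have h := integrableOn_image_iff_integrableOn_deriv_smul_of_monotoneOn MeasurableSet.univ
    (fun w _ => (hasDerivAt_sigmoid_two_pi_mul w).hasDerivWithinAt)
    (monotone_sigmoid_two_pi_mul.monotoneOn univ) fun _ => (1 : ℝ)
  rw [image_univ, range_sigmoid_two_pi_mul] at h
  simpa using h

lemma integral_sechSqDensity_smul_comp_sigmoid (g : ℝ → ℂ) :
    ∫ w, sechSqDensity w • g (sigmoid (2 * π * w)) = ∫ u in Ioo (0 : ℝ) 1, g u := by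
  have h := integral_image_eq_integral_deriv_smul_of_monotoneOn MeasurableSet.univ
    (fun w _ => (hasDerivAt_sigmoid_two_pi_mul w).hasDerivWithinAt)
    (monotone_sigmoid_two_pi_mul.monotoneOn univ) g
  rw [image_univ, range_sigmoid_two_pi_mul, setIntegral_univ] at h
  exact h.symm

lemma sigmoid_cpow_neg_mul_one_sub_sigmoid_cpow (s : ℂ) (x : ℝ) :
    (sigmoid x : ℂ) ^ (-s) * (1 - sigmoid x : ℂ) ^ s = Complex.exp (-(s * x)) := by
  have hσ : (sigmoid x : ℂ) ≠ 0 := by exact_mod_cast (sigmoid_pos x).ne'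
  have hsub : (1 - sigmoid x : ℂ) = (sigmoid x : ℂ) * (Real.exp (-x) : ℂ) := by
    rw [← Complex.ofReal_mul, sigmoid_mul_rexp_neg, sigmoid_neg, Complex.ofReal_sub,
      Complex.ofReal_one]
  rw [hsub, Complex.mul_cpow_ofReal_nonneg (sigmoid_nonneg x) (Real.exp_pos _).le, ← mul_assoc,
    ← Complex.cpow_add _ _ hσ, neg_add_cancel, Complex.cpow_zero, one_mul,
    Complex.cpow_def_of_ne_zero (by exact_mod_cast (Real.exp_pos _).ne'),
    ← Complex.ofReal_log (Real.exp_pos _).le, Real.log_exp]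
  congr 1
  push_cast
  ring

lemma betaIntegral_one_sub_one_add {s : ℂ} (hs0 : s ≠ 0) (hs : |s.re| < 1) :
    Complex.betaIntegral (1 - s) (1 + s) = π * s / Complex.sin (π * s) := by
  obtain ⟨hlb, hub⟩ := abs_lt.1 hs
  have hΓ := Complex.Gamma_mul_Gamma_eq_betaIntegral (s := 1 - s) (t := 1 + s)
    (by rw [Complex.sub_re, Complex.one_re]; linarith)
    (by rw [Complex.add_re, Complex.one_re]; linarith)
  rw [sub_add_add_cancel, Complex.Gamma_add_one 1 one_ne_zero, Complex.Gamma_one, mul_one,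
    one_mul] at hΓ
  rw [← hΓ, add_comm 1 s, Complex.Gamma_add_one s hs0, mul_left_comm, mul_comm (Complex.Gamma _),
    Complex.Gamma_mul_Gamma_one_sub]
  ring

lemma integral_sechSqDensity_mul_cexp {s : ℂ} (hs0 : s ≠ 0) (hs : |s.re| < 1) :
    ∫ w : ℝ, sechSqDensity w * Complex.exp (-(s * (2 * π * w))) = π * s / Complex.sin (π * s) := by
  rw [← betaIntegral_one_sub_one_add hs0 hs, Complex.betaIntegral,
    intervalIntegral.integral_of_le zero_le_one, integral_Ioc_eq_integral_Ioo,
    ← integral_sechSqDensity_smul_comp_sigmoid]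
  refine integral_congr_ae (ae_of_all _ fun w => ?_)
  have h := sigmoid_cpow_neg_mul_one_sub_sigmoid_cpow s (2 * π * w)
  push_cast at h
  simp only [sub_sub_cancel_left, add_sub_cancel_left, Complex.real_smul, h]

lemma integral_sechSqDensity_mul_cexp_neg_I_mul {t : ℝ} (ht : t ≠ 0) :
    ∫ w : ℝ, sechSqDensity w * Complex.exp (-(Complex.I * w * t)) =
      t * Complex.exp (-(t / 2)) / (1 - Complex.exp (-t)) := by
  have hπ : (π : ℂ) ≠ 0 := Complex.ofReal_ne_zero.2 pi_ne_zero
  have ht' : (t : ℂ) ≠ 0 := Complex.ofReal_ne_zero.2 ht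
  set s : ℂ := t / (2 * π) * Complex.I with hs
  have hs0 : s ≠ 0 :=
    mul_ne_zero (div_ne_zero ht' (mul_ne_zero two_ne_zero hπ)) Complex.I_ne_zero
  have hre : s.re = 0 := by
    rw [hs, Complex.mul_I_re, neg_eq_zero]
    exact_mod_cast Complex.ofReal_im (t / (2 * π))
  have hsin : Complex.sin (π * s) = Complex.sinh (t / 2) * Complex.I := by
    rw [← Complex.sin_mul_I, hs]
    congr 1
    field_simp
  have hexp : Complex.exp (-t) = Complex.exp (-(t / 2)) ^ 2 := by
    rw [← Complex.exp_nat_mul]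
    congr 1
    push_cast
    ring
  have hsinh : Complex.sinh (t / 2) =
      (1 - Complex.exp (-t)) / (2 * Complex.exp (-(t / 2))) := by
    rw [hexp, Complex.sinh, ← neg_neg ((t : ℂ) / 2), Complex.exp_neg (-_), neg_neg]
    field_simp [Complex.exp_ne_zero]
  calc ∫ w : ℝ, sechSqDensity w * Complex.exp (-(Complex.I * w * t))
      = ∫ w : ℝ, sechSqDensity w * Complex.exp (-(s * (2 * π * w))) := by
        refine integral_congr_ae (ae_of_all _ fun w => ?_)
        simp only [hs]
        congr 3
        field_simp
    _ = π * s / Complex.sin (π * s) :=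
        integral_sechSqDensity_mul_cexp hs0 (by rw [hre, abs_zero]; exact one_pos)
    _ = t * Complex.exp (-(t / 2)) / (1 - Complex.exp (-t)) := by
        rw [hsin, hsinh, hs]
        field_simp [Complex.I_ne_zero, Complex.exp_ne_zero]

end SechSquared

section Polygamma

open Set Filter Topology

lemma summable_one_div_add_nat_pow (a : ℝ) {k : ℕ} (hk : 2 ≤ k) :
    Summable fun n : ℕ => 1 / (a + n) ^ k := by
  have h := (Real.summable_one_div_nat_add_rpow a k).2 (by exact_mod_cast hk)
  refine Summable.of_norm (h.congr fun n => ?_)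
  rw [norm_div, norm_one, norm_pow, Real.norm_eq_abs, rpow_natCast, add_comm]

lemma hasDerivAt_one_div_add_pow (k : ℕ) {a y : ℝ} (h : y + a ≠ 0) :
    HasDerivAt (fun z : ℝ => 1 / (z + a) ^ k) (-k * (1 / (y + a) ^ (k + 1))) y := by
  have hd := (hasDerivAt_zpow (-(k : ℤ)) (y + a) (Or.inl h)).comp_add_const y a
  have hexp : (-(k : ℤ) - 1) = -((k + 1 : ℕ) : ℤ) := by push_cast; ring
  simpa only [hexp, zpow_neg, zpow_natCast, ← one_div, Int.cast_neg, Int.cast_natCast] using hd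

lemma hasDerivAt_tsum_one_div_add_nat_pow {k : ℕ} (hk : 2 ≤ k) {y : ℝ} (hy : 0 < y) :
    HasDerivAt (fun z : ℝ => ∑' n : ℕ, 1 / (z + n) ^ k)
      (-k * ∑' n : ℕ, 1 / (y + n) ^ (k + 1)) y := by
  rw [← tsum_mul_left]
  have hu := (summable_one_div_add_nat_pow (y / 2) (by lia : 2 ≤ k + 1)).mul_left (k : ℝ)
  have hmem : y ∈ Ioi (y / 2) := half_lt_self hy
  refine hasDerivAt_tsum_of_isPreconnected (g := fun (n : ℕ) (z : ℝ) => 1 / (z + n) ^ k)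
    (g' := fun (n : ℕ) (z : ℝ) => -k * (1 / (z + n) ^ (k + 1))) hu isOpen_Ioi
    isPreconnected_Ioi (fun n z hz => ?_) (fun n z hz => ?_) hmem
    (summable_one_div_add_nat_pow y hk) hmem
  all_goals
    have hlt : y / 2 < z := hz
    have hz0 : 0 < z := (half_pos hy).trans hlt
  · exact hasDerivAt_one_div_add_pow k (by positivity)
  · rw [norm_mul, norm_neg, Real.norm_of_nonneg (by positivity),
      Real.norm_of_nonneg (by positivity)]
    gcongr

/-- The function `y ↦ log (((a + 1) / a) ^ y / ((y + a) / a))`; for `a = 1 + n` it is the logarithm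
of the `n`-th factor of Euler's product for `Γ(y + 1)`. -/
noncomputable def logEulerFactor (a y : ℝ) : ℝ :=
  y * (log (a + 1) - log a) - (log (y + a) - log a)

lemma logEulerFactor_one_right (a : ℝ) : logEulerFactor a 1 = 0 := by
  rw [logEulerFactor, one_mul, add_comm 1 a, sub_self]

lemma hasDerivAt_logEulerFactor {a y : ℝ} (h : y + a ≠ 0) :
    HasDerivAt (logEulerFactor a) (log (a + 1) - log a - 1 / (y + a)) y :=
  (hasDerivAt_mul_const (log (a + 1) - log a)).sub
    ((((hasDerivAt_id y).add_const a).log h).sub_const (log a))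

lemma one_div_sub_one_div_add_le {a y : ℝ} (ha : 0 < a) (hy : 0 ≤ y) :
    1 / a - 1 / (y + a) ≤ y * (1 / a ^ 2) := by
  calc 1 / a - 1 / (y + a) = y * (1 / (a * (y + a))) := by field_simp; ring
    _ ≤ y * (1 / a ^ 2) := by
        rw [sq]
        gcongr
        linarith

lemma one_div_add_one_le_log_add_one_sub_log {a : ℝ} (ha : 0 < a) :
    1 / (1 + a) ≤ log (a + 1) - log a := by
  rw [← Real.log_div (by positivity) (by positivity)]
  refine le_of_eq_of_le ?_ (one_sub_inv_le_log_of_pos (by positivity : 0 < (a + 1) / a))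
  field_simp
  ring

lemma log_add_one_sub_log_le_one_div {a : ℝ} (ha : 0 < a) :
    log (a + 1) - log a ≤ 1 / a := by
  rw [← Real.log_div (by positivity) (by positivity)]
  refine (log_le_sub_one_of_pos (by positivity : 0 < (a + 1) / a)).trans_eq ?_
  field_simp
  ring

lemma abs_log_add_one_sub_log_sub_one_div_le {a y : ℝ} (ha : 0 < a) (hy : 0 ≤ y) :
    |log (a + 1) - log a - 1 / (y + a)| ≤ (y + 1) * (1 / a ^ 2) := by
  have hlower := one_div_add_one_le_log_add_one_sub_log ha
  have hupper := log_add_one_sub_log_le_one_div ha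
  have hgap := one_div_sub_one_div_add_le ha hy
  have hgap_one := one_div_sub_one_div_add_le ha zero_le_one
  have hle : 1 / (y + a) ≤ 1 / a := one_div_le_one_div_of_le ha (by linarith)
  have hsq : 0 ≤ 1 / a ^ 2 := by positivity
  rw [abs_le]
  constructor <;> linarith [mul_nonneg hy hsq]

lemma sum_range_logEulerFactor (y : ℝ) (N : ℕ) :
    ∑ n ∈ Finset.range N, logEulerFactor (1 + n) y =
      BohrMollerup.logGammaSeq y N + log y + y * (log (N + 1) - log N) := by
  induction N with
  | zero => simp [BohrMollerup.logGammaSeq]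
  | succ N ih =>
    rw [Finset.sum_range_succ, ih]
    simp only [BohrMollerup.logGammaSeq, logEulerFactor]
    rw [Finset.sum_range_succ _ (N + 1), Nat.factorial_succ, Nat.cast_mul,
      Real.log_mul (by positivity) (by positivity)]
    push_cast
    ring_nf

lemma tendsto_sum_range_logEulerFactor {y : ℝ} (hy : 0 < y) :
    Tendsto (fun N => ∑ n ∈ Finset.range N, logEulerFactor (1 + n) y) atTop
      (𝓝 (log (Gamma y) + log y)) := by
  have h := ((BohrMollerup.tendsto_log_gamma hy).add_const (log y)).add
    (tendsto_log_nat_add_one_sub_log.const_mul y)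
  rw [mul_zero, add_zero] at h
  exact h.congr fun N => (sum_range_logEulerFactor y N).symm

lemma summable_logEulerFactor_and_hasDerivAt_tsum {y : ℝ} (hy : 0 < y) :
    (Summable fun n : ℕ => logEulerFactor (1 + n) y) ∧
    HasDerivAt (fun z => ∑' n : ℕ, logEulerFactor (1 + n) z)
      (∑' n : ℕ, (log (1 + n + 1) - log (1 + n) - 1 / (y + (1 + n)))) y := by
  have hu := (summable_one_div_add_nat_pow 1 le_rfl).mul_left (y + 1 + 1)
  have hderiv (n : ℕ) (z : ℝ) (hz : z ∈ Ioo 0 (y + 1)) :=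
    hasDerivAt_logEulerFactor (a := 1 + n) (y := z) (by have := hz.1; positivity)
  have hbound (n : ℕ) (z : ℝ) (hz : z ∈ Ioo 0 (y + 1)) :
      ‖log (1 + n + 1) - log (1 + n) - 1 / (z + (1 + n))‖ ≤ (y + 1 + 1) * (1 / (1 + n) ^ 2) :=
    (abs_log_add_one_sub_log_sub_one_div_le (by positivity) hz.1.le).trans
      (by have := hz.2; gcongr)
  -- Termwise differentiation needs convergence at one point; at `1` every term vanishes.
  have hone : (1 : ℝ) ∈ Ioo 0 (y + 1) := ⟨one_pos, by linarith⟩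
  have hmem : y ∈ Ioo 0 (y + 1) := ⟨hy, by linarith⟩
  have hsum_one : Summable fun n : ℕ => logEulerFactor (1 + n) 1 := by
    simpa only [logEulerFactor_one_right] using summable_zero
  exact ⟨summable_of_summable_hasDerivAt_of_isPreconnected hu isOpen_Ioo isPreconnected_Ioo
    hderiv hbound hone hsum_one hmem, hasDerivAt_tsum_of_isPreconnected hu isOpen_Ioo
    isPreconnected_Ioo hderiv hbound hone hsum_one hmem⟩

lemma tsum_logEulerFactor {y : ℝ} (hy : 0 < y) :
    ∑' n : ℕ, logEulerFactor (1 + n) y = log (Gamma y) + log y :=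
  ((summable_logEulerFactor_and_hasDerivAt_tsum hy).1.hasSum_iff_tendsto_nat.2
    (tendsto_sum_range_logEulerFactor hy)).tsum_eq

lemma hasDerivAt_log_Gamma {y : ℝ} (hy : 0 < y) :
    HasDerivAt (fun y => log (Gamma y))
      (∑' n : ℕ, (log (1 + n + 1) - log (1 + n) - 1 / (y + (1 + n))) - y⁻¹) y := by
  refine ((summable_logEulerFactor_and_hasDerivAt_tsum hy).2.sub
    (hasDerivAt_log hy.ne')).congr_of_eventuallyEq ?_
  filter_upwards [lt_mem_nhds hy] with z hz
  rw [Pi.sub_apply, tsum_logEulerFactor hz, add_sub_cancel_right]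

lemma hasDerivAt_tsum_log_sub_one_div {y : ℝ} (hy : 0 < y) :
    HasDerivAt (fun y => ∑' n : ℕ, (log (1 + n + 1) - log (1 + n) - 1 / (y + (1 + n))))
      (∑' n : ℕ, 1 / (y + (1 + n)) ^ 2) y := by
  refine hasDerivAt_tsum_of_isPreconnected (t := Ioi 0)
    (g := fun (n : ℕ) (y : ℝ) => log (1 + n + 1) - log (1 + n) - 1 / (y + (1 + n)))
    (g' := fun (n : ℕ) (y : ℝ) => 1 / (y + (1 + n)) ^ 2)
    (summable_one_div_add_nat_pow 1 le_rfl) isOpen_Ioi isPreconnected_Ioi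
    (fun n z hz => ?_) (fun n z hz => ?_) hy ?_ hy
  · have h := hasDerivAt_one_div_add_pow 1 (a := 1 + n) (y := z)
      (by have := mem_Ioi.1 hz; positivity)
    simpa using h.const_sub (log (1 + n + 1) - log (1 + n))
  · have hz0 : 0 < z := hz
    rw [Real.norm_of_nonneg (by positivity)]
    exact one_div_le_one_div_of_le (by positivity)
      (pow_le_pow_left₀ (by positivity) (le_add_of_nonneg_left hz0.le) 2)
  · exact .of_norm_bounded ((summable_one_div_add_nat_pow 1 le_rfl).mul_left (y + 1))
      fun n => abs_log_add_one_sub_log_sub_one_div_le (by positivity) hy.le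

lemma hasDerivAt_deriv_log_Gamma {y : ℝ} (hy : 0 < y) :
    HasDerivAt (deriv fun y => log (Gamma y)) (∑' n : ℕ, 1 / (y + n) ^ 2) y := by
  have hsum : ∑' n : ℕ, 1 / (y + n) ^ 2 = ∑' n : ℕ, 1 / (y + (1 + n)) ^ 2 - -(y ^ 2)⁻¹ := by
    rw [(summable_one_div_add_nat_pow y le_rfl).tsum_eq_zero_add, sub_neg_eq_add, add_comm]
    simp only [Nat.cast_zero, Nat.cast_add, Nat.cast_one, add_zero, one_div, add_comm (1 : ℝ)]
  rw [hsum]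
  refine ((hasDerivAt_tsum_log_sub_one_div hy).sub (hasDerivAt_inv hy.ne')).congr_of_eventuallyEq ?_
  filter_upwards [lt_mem_nhds hy] with z hz
  exact (hasDerivAt_log_Gamma hz).deriv

lemma iteratedDeriv_add_two_log_Gamma (j : ℕ) {y : ℝ} (hy : 0 < y) :
    iteratedDeriv (j + 2) (fun y => log (Gamma y)) y =
      (-1) ^ j * (j + 1).factorial * ∑' n : ℕ, 1 / (y + n) ^ (j + 2) := by
  induction j generalizing y with
  | zero =>
    rw [iteratedDeriv_succ, iteratedDeriv_one, (hasDerivAt_deriv_log_Gamma hy).deriv]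
    simp
  | succ j ih =>
    have hseries := (hasDerivAt_tsum_one_div_add_nat_pow (by lia : 2 ≤ j + 2) hy).const_mul
      ((-1 : ℝ) ^ j * (j + 1).factorial)
    have heq : iteratedDeriv (j + 2) (fun y => log (Gamma y)) =ᶠ[𝓝 y]
        fun z => (-1) ^ j * (j + 1).factorial * ∑' n : ℕ, 1 / (z + n) ^ (j + 2) := by
      filter_upwards [lt_mem_nhds hy] with z hz using ih hz
    rw [iteratedDeriv_succ, heq.deriv_eq, hseries.deriv, Nat.factorial_succ (j + 1)]
    push_cast
    ring

lemma polygamma_succ (j : ℕ) {x : ℝ} (hx : 0 < x) :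
    polygamma (j + 1) x = (-1) ^ j * (j + 1).factorial * ∑' n : ℕ, 1 / (x + n) ^ (j + 2) :=
  iteratedDeriv_add_two_log_Gamma j hx

lemma neg_one_pow_mul_polygamma_succ_div_factorial (j : ℕ) {x : ℝ} (hx : 0 < x) :
    (-1) ^ j * polygamma (j + 1) x / j.factorial = (j + 1) * ∑' n : ℕ, 1 / (x + n) ^ (j + 2) := by
  have hsign : (-1 : ℝ) ^ j * (-1) ^ j = 1 := by rw [← mul_pow, neg_one_mul, neg_neg, one_pow]
  rw [polygamma_succ j hx, Nat.factorial_succ, ← mul_assoc, ← mul_assoc, hsign]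
  push_cast
  field_simp

end Polygamma

section HurwitzSeries

open Set

lemma hasSum_integral_pow_mul_cexp_div_one_sub_cexp {k : ℕ} (hk : 1 ≤ k) {z : ℂ}
    (hz : 0 < z.re) :
    HasSum (fun n : ℕ => (k.factorial : ℂ) / (z + n) ^ (k + 1))
      (∫ t : ℝ in Ioi 0, (t : ℂ) ^ k * Complex.exp (-(z * t)) / (1 - Complex.exp (-t))) := by
  have hre (n : ℕ) : 0 < (z + n).re := by
    rw [Complex.add_re, Complex.natCast_re]
    positivity
  have hnorm (n : ℕ) : ∫ t : ℝ in Ioi 0, ‖(t : ℂ) ^ k * Complex.exp (-((z + n) * t))‖ =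
      k.factorial * (1 / (z.re + n) ^ (k + 1)) := by
    rw [setIntegral_congr_fun measurableSet_Ioi fun t ht =>
        norm_pow_mul_cexp_neg_mul k (z + n) (mem_Ioi.1 ht).le,
      integral_pow_mul_exp_neg_mul_Ioi k (hre n), Complex.add_re, Complex.natCast_re, mul_one_div]
  have hsummable : Summable fun n : ℕ =>
      ∫ t : ℝ in Ioi 0, ‖(t : ℂ) ^ k * Complex.exp (-((z + n) * t))‖ := by
    simp_rw [hnorm]
    exact (summable_one_div_add_nat_pow z.re (by lia)).mul_left _
  have hgeometric : ∀ t ∈ Ioi (0 : ℝ), ∑' n : ℕ, (t : ℂ) ^ k * Complex.exp (-((z + n) * t)) =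
      (t : ℂ) ^ k * Complex.exp (-(z * t)) / (1 - Complex.exp (-t)) := fun t ht => by
    have hlt : ‖Complex.exp (-t)‖ < 1 := by
      rw [Complex.norm_exp, Complex.neg_re, Complex.ofReal_re, Real.exp_lt_one_iff, neg_lt_zero]
      exact ht
    rw [div_eq_mul_inv, ← tsum_geometric_of_norm_lt_one hlt, ← tsum_mul_left]
    refine tsum_congr fun n => ?_
    rw [← Complex.exp_nat_mul, mul_assoc, ← Complex.exp_add]
    ring_nf
  have h := hasSum_integral_of_summable_integral_norm
    (fun n : ℕ => integrableOn_pow_mul_cexp_neg_mul k (hre n)) hsummable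
  rw [setIntegral_congr_fun measurableSet_Ioi hgeometric] at h
  simpa only [integral_pow_mul_cexp_neg_mul_Ioi k (hre _)] using h

lemma integral_sechSqDensity_div_pow (k : ℕ) {z : ℂ} (hz : 1 / 2 < z.re) :
    ∫ w : ℝ, sechSqDensity w / (z - 1 / 2 + Complex.I * w) ^ (k + 1) =
      (k + 1) * ∑' n : ℕ, 1 / (z + n) ^ (k + 2) := by
  have ha : 0 < (z - 1 / 2).re := by
    rw [Complex.sub_re]
    norm_num
    linarith
  have hfact : (k.factorial : ℂ) ≠ 0 := Nat.cast_ne_zero.2 k.factorial_ne_zero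
  refine mul_left_cancel₀ hfact ?_
  calc (k.factorial : ℂ) * ∫ w : ℝ, sechSqDensity w / (z - 1 / 2 + Complex.I * w) ^ (k + 1)
      = ∫ t : ℝ in Ioi 0, (t : ℂ) ^ k * Complex.exp (-((z - 1 / 2) * t)) *
          ∫ w : ℝ, sechSqDensity w * Complex.exp (-(Complex.I * w * t)) :=
        integral_div_pow_eq_integral_Ioi_fourier integrable_sechSqDensity.ofReal k ha
    _ = ∫ t : ℝ in Ioi 0,
          (t : ℂ) ^ (k + 1) * Complex.exp (-(z * t)) / (1 - Complex.exp (-t)) := by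
        refine setIntegral_congr_fun measurableSet_Ioi fun t ht => ?_
        have hexp : Complex.exp (-(z * t)) =
            Complex.exp (-((z - 1 / 2) * t)) * Complex.exp (-(t / 2)) := by
          rw [← Complex.exp_add]
          ring_nf
        simp only [integral_sechSqDensity_mul_cexp_neg_I_mul (mem_Ioi.1 ht).ne', hexp]
        ring
    _ = ∑' n : ℕ, ((k + 1).factorial : ℂ) / (z + n) ^ (k + 2) :=
        (hasSum_integral_pow_mul_cexp_div_one_sub_cexp (by lia) (by linarith)).tsum_eq.symm
    _ = k.factorial * ((k + 1) * ∑' n : ℕ, 1 / (z + n) ^ (k + 2)) := by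
        simp only [Nat.factorial_succ, Nat.cast_mul, Nat.cast_add, Nat.cast_one,
          ← mul_one_div (_ * _ : ℂ), tsum_mul_left]
        ring

lemma pi_div_two_mul_integral_sech_sq_smul_zpow_neg (k : ℕ) {z : ℂ} (hz : 1 / 2 < z.re) :
    (π / 2 : ℂ) * ∫ w : ℝ, ((1 / Real.cosh (π * w)) ^ 2 : ℝ) •
        ((z + Complex.I * w - 1 / 2) ^ (-((k + 1 : ℕ) : ℤ))) =
      (k + 1) * ∑' n : ℕ, 1 / (z + n) ^ (k + 2) := by
  rw [← integral_sechSqDensity_div_pow k hz, ← integral_const_mul]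
  refine integral_congr_ae (ae_of_all _ fun w => ?_)
  simp only [sechSqDensity, Complex.real_smul, zpow_neg, zpow_natCast, add_sub_right_comm]
  push_cast
  ring

end HurwitzSeries

theorem sech_negative_moment_general (m : ℕ) (hm : 1 ≤ m) :
    (∀ x : ℝ, 1 / 2 < x →
      (π / 2 : ℂ) * ∫ w : ℝ,
          ((1 / Real.cosh (π * w)) ^ 2 : ℝ) • (((x : ℂ) + Complex.I * w - 1 / 2) ^ (-(m : ℤ))) =
        (((-1 : ℝ) ^ (m - 1) * polygamma m x / Nat.factorial (m - 1) : ℝ) : ℂ)) ∧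
    (π / 2 : ℂ) * ∫ w : ℝ,
        ((1 / Real.cosh (π * w)) ^ 2 : ℝ) • (((1 : ℂ) + Complex.I * w - 1 / 2) ^ (-(m : ℤ))) =
      (m : ℂ) * riemannZeta (m + 1) := by
  obtain ⟨k, rfl⟩ := Nat.exists_eq_add_of_le' hm
  refine ⟨fun x hx => ?_, ?_⟩
  · rw [pi_div_two_mul_integral_sech_sq_smul_zpow_neg k (by rwa [Complex.ofReal_re]),
      Nat.add_sub_cancel, neg_one_pow_mul_polygamma_succ_div_factorial k (by linarith)]
    push_cast
    rfl
  · rw [pi_div_two_mul_integral_sech_sq_smul_zpow_neg k (by norm_num),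
      zeta_eq_tsum_one_div_nat_add_one_cpow (by norm_cast; lia)]
    norm_cast
    simp only [add_comm 1, add_assoc, Nat.reduceAdd]

/-- For `m ≥ 2` and `x > 1/2`,
`(π/2) ∫_ℝ sech²(πw) (x+iw-1/2)^{-m} dw = (-1)^{m-1} ψ^{(m)}(x)/(m-1)!`;
in particular at `x = 1` this equals `m·ζ(m+1)`. -/
theorem sech_negative_moment (m : ℕ) (hm : 2 ≤ m) :
    (∀ x : ℝ, 1 / 2 < x →
      (π / 2 : ℂ) * ∫ w : ℝ,
          ((1 / Real.cosh (π * w)) ^ 2 : ℝ) • (((x : ℂ) + Complex.I * w - 1 / 2) ^ (-(m : ℤ))) =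
        (((-1 : ℝ) ^ (m - 1) * polygamma m x / Nat.factorial (m - 1) : ℝ) : ℂ)) ∧
    (π / 2 : ℂ) * ∫ w : ℝ,
        ((1 / Real.cosh (π * w)) ^ 2 : ℝ) • (((1 : ℂ) + Complex.I * w - 1 / 2) ^ (-(m : ℤ))) =
      (m : ℂ) * riemannZeta (m + 1) :=
  sech_negative_moment_general m (one_le_two.trans hm)
end

section
/- ζ(3) = -(π²/4) ∫_{ℝ²} ∫_0^1 sech²(πw₁) sech²(πw₂) / (i w₂ - 1/2 + u(i w₁ - 1/2)) du dw₂ dw₁, where the triple integral converges and is real. -/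
open MeasureTheory Real

/-!
Since `D = i w₂ - 1/2 + u (i w₁ - 1/2)` has negative real part, `-1/D = ∫₀^∞ exp (t D) dt`. After
Fubini the `w`-integrals separate, and each is a value of the moment generating function
`πa / sin (πa)` of the logistic distribution, whose density is a rescaled `sech²`. This leaves
`(4/π²) ∫₀^∞ ∫₀¹ b(t) b(ut) du dt` with `b(t) = t / (eᵗ - 1)`.

With `v = ut` this is the integral of `b(v) / (eᵗ - 1)` over `0 < v < t`. As `1 / (eᵗ - 1)` is
`-L'(t)` for `L(t) = -log (1 - e⁻ᵗ)`, integrating over `t` gives `∫₀^∞ v L(v) (-L'(v)) dv`.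
Now `L` is an involution of `(0, ∞)`, so `v L(v)` is unchanged by the substitution `v ↦ L(v)` and
the integral equals `∫₀^∞ v L(v) dv`, a Mellin transform with value `Γ(2) ζ(3)`.
-/

lemma complex_Gamma_two : Complex.Gamma 2 = 1 := by
  simp [Complex.Gamma_ofNat_eq_factorial]

section Logistic

lemma sigmoid_mul_sigmoid_neg (x : ℝ) :
    sigmoid x * sigmoid (-x) = (1 / cosh (x / 2)) ^ 2 / 4 := by
  have hexp : exp x = exp (x / 2) ^ 2 := by rw [← exp_nat_mul]; congr 1; push_cast; ring
  rw [sigmoid_def, sigmoid_def, neg_neg, cosh_eq, exp_neg, exp_neg, hexp]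
  field

lemma hasDerivAt_sigmoid_mul_sigmoid_neg (x : ℝ) :
    HasDerivAt sigmoid (sigmoid x * sigmoid (-x)) x := by
  simpa only [sigmoid_neg] using hasDerivAt_sigmoid x

lemma integral_Ioo_zero_one_eq_integral_sigmoid {E : Type*} [NormedAddCommGroup E]
    [NormedSpace ℝ E] (f : ℝ → E) :
    ∫ x in Set.Ioo 0 1, f x = ∫ x, (sigmoid x * sigmoid (-x)) • f (sigmoid x) := by
  rw [← range_sigmoid, ← Set.image_univ, integral_image_eq_integral_deriv_smul_of_monotoneOn
    MeasurableSet.univ (fun x _ => (hasDerivAt_sigmoid_mul_sigmoid_neg x).hasDerivWithinAt)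
    (sigmoid_monotone.monotoneOn _), setIntegral_univ]

lemma integrable_sigmoid_mul_sigmoid_neg : Integrable fun x => sigmoid x * sigmoid (-x) := by
  have h := (integrableOn_image_iff_integrableOn_deriv_smul_of_monotoneOn MeasurableSet.univ
    (fun x _ => (hasDerivAt_sigmoid_mul_sigmoid_neg x).hasDerivWithinAt)
    (sigmoid_monotone.monotoneOn _) fun _ => (1 : ℝ)).1
    (by rw [Set.image_univ, range_sigmoid]; simp)
  simpa only [smul_eq_mul, mul_one, integrableOn_univ] using h

lemma sigmoid_cpow_mul_sigmoid_neg_cpow (a : ℂ) (x : ℝ) :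
    (sigmoid x : ℂ) ^ a * (sigmoid (-x) : ℂ) ^ (-a) = Complex.exp (a * x) := by
  have hx := sigmoid_pos x
  have hx' := sigmoid_pos (-x)
  have hlog : log (sigmoid (-x)) = log (sigmoid x) - x := by
    rw [← sigmoid_mul_rexp_neg, log_mul hx.ne' (exp_pos _).ne', log_exp, sub_eq_add_neg]
  rw [Complex.cpow_def_of_ne_zero (by exact_mod_cast hx.ne'),
    Complex.cpow_def_of_ne_zero (by exact_mod_cast hx'.ne'), ← Complex.ofReal_log hx.le,
    ← Complex.ofReal_log hx'.le, hlog, ← Complex.exp_add]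
  congr 1
  push_cast
  ring

lemma betaIntegral_eq_integral_sigmoid (u v : ℂ) :
    Complex.betaIntegral u v = ∫ x : ℝ, (sigmoid x : ℂ) ^ u * (sigmoid (-x) : ℂ) ^ v := by
  rw [Complex.betaIntegral, intervalIntegral.integral_of_le zero_le_one,
    integral_Ioc_eq_integral_Ioo, integral_Ioo_zero_one_eq_integral_sigmoid]
  refine integral_congr_ae (.of_forall fun x => ?_)
  have hx : (sigmoid x : ℂ) ≠ 0 := by exact_mod_cast (sigmoid_pos x).ne'
  have hx' : (sigmoid (-x) : ℂ) ≠ 0 := by exact_mod_cast (sigmoid_pos (-x)).ne'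
  have hneg : 1 - (sigmoid x : ℂ) = sigmoid (-x) := by rw [sigmoid_neg]; push_cast; rfl
  simp only [hneg, Complex.real_smul, Complex.cpow_sub _ _ hx, Complex.cpow_sub _ _ hx',
    Complex.cpow_one]
  push_cast
  field

lemma betaIntegral_one_add_one_sub_eq_integral_sigmoid (a : ℂ) :
    Complex.betaIntegral (1 + a) (1 - a) =
      ∫ x : ℝ, ((sigmoid x * sigmoid (-x) : ℝ) : ℂ) * Complex.exp (a * x) := by
  rw [betaIntegral_eq_integral_sigmoid]
  refine integral_congr_ae (.of_forall fun x => ?_)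
  have hx : (sigmoid x : ℂ) ≠ 0 := by exact_mod_cast (sigmoid_pos x).ne'
  have hx' : (sigmoid (-x) : ℂ) ≠ 0 := by exact_mod_cast (sigmoid_pos (-x)).ne'
  simp only [← sigmoid_cpow_mul_sigmoid_neg_cpow, sub_eq_add_neg, Complex.cpow_add _ _ hx,
    Complex.cpow_add _ _ hx', Complex.cpow_one]
  push_cast
  ring

lemma betaIntegral_one_add_one_sub {a : ℂ} (ha : a ≠ 0) (hre : |a.re| < 1) :
    Complex.betaIntegral (1 + a) (1 - a) = π * a / Complex.sin (π * a) := by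
  obtain ⟨hre₁, hre₂⟩ := abs_lt.1 hre
  have hadd : 0 < (1 + a).re := by rw [Complex.add_re, Complex.one_re]; linarith
  have hsub : 0 < (1 - a).re := by rw [Complex.sub_re, Complex.one_re]; linarith
  rw [Complex.betaIntegral_eq_Gamma_mul_div _ _ hadd hsub, add_add_sub_cancel,
    one_add_one_eq_two, complex_Gamma_two, div_one, add_comm, Complex.Gamma_add_one a ha, mul_assoc,
    Complex.Gamma_mul_Gamma_one_sub]
  ring

lemma sech_sq_eq_sigmoid (w : ℝ) :
    (1 / cosh (π * w)) ^ 2 = 4 * (sigmoid (2 * π * w) * sigmoid (-(2 * π * w))) := by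
  rw [sigmoid_mul_sigmoid_neg, show 2 * π * w / 2 = π * w by ring]
  ring

lemma integrable_sech_sq : Integrable fun w : ℝ => (1 / cosh (π * w)) ^ 2 := by
  simp only [sech_sq_eq_sigmoid]
  exact (integrable_sigmoid_mul_sigmoid_neg.comp_mul_left' two_pi_pos.ne').const_mul 4

lemma integral_sech_sq_mul_cexp {z : ℂ} (hz : z ≠ 0) (hre : |z.re| < 2 * π) :
    ∫ w : ℝ, (((1 / cosh (π * w)) ^ 2 : ℝ) : ℂ) * Complex.exp (z * w) =
      z / π / Complex.sin (z / 2) := by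
  have hπ : (π : ℂ) ≠ 0 := by exact_mod_cast pi_ne_zero
  set a : ℂ := z / (2 * π : ℝ) with ha
  have ha_re : |a.re| < 1 := by
    rwa [ha, Complex.div_ofReal_re, abs_div, abs_of_pos two_pi_pos, div_lt_one two_pi_pos]
  have ha_ne : a ≠ 0 := div_ne_zero hz (by exact_mod_cast two_pi_pos.ne')
  have hrescale (w : ℝ) : (((1 / cosh (π * w)) ^ 2 : ℝ) : ℂ) * Complex.exp (z * w) =
      4 * (((sigmoid (2 * π * w) * sigmoid (-(2 * π * w)) : ℝ) : ℂ) *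
        Complex.exp (a * (2 * π * w : ℝ))) := by
    rw [sech_sq_eq_sigmoid, ha]
    push_cast
    field_simp
  simp only [hrescale]
  rw [integral_const_mul, Measure.integral_comp_mul_left
    (fun x : ℝ => ((sigmoid x * sigmoid (-x) : ℝ) : ℂ) * Complex.exp (a * x)),
    ← betaIntegral_one_add_one_sub_eq_integral_sigmoid, betaIntegral_one_add_one_sub ha_ne ha_re,
    abs_of_pos (inv_pos.2 two_pi_pos), Complex.real_smul,
    show (π : ℂ) * a = z / 2 by rw [ha]; push_cast; field_simp]
  push_cast
  field

end Logistic

/-- The generating function `t / (eᵗ - 1)` of the Bernoulli numbers; division by zero gives it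
the value `0` at `t = 0`, where the limit is `1`. -/
noncomputable def bernoulliGen (t : ℝ) : ℝ := t / (exp t - 1)

/-- The number `y` with `e⁻ˣ + e⁻ʸ = 1`, for `x > 0`. This is an involution of `(0, ∞)`, and
also the polylogarithm `Li₁(e⁻ˣ)`. -/
noncomputable def logDual (x : ℝ) : ℝ := -log (1 - exp (-x))

section BernoulliGen

lemma bernoulliGen_nonneg (t : ℝ) : 0 ≤ bernoulliGen t := by
  rcases le_total 0 t with h | h
  · exact div_nonneg h (by linarith [one_le_exp h])
  · exact div_nonneg_of_nonpos h (by linarith [exp_le_one_iff.2 h])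

@[fun_prop]
lemma measurable_bernoulliGen : Measurable bernoulliGen := by
  unfold bernoulliGen
  fun_prop

lemma bernoulliGen_eq_div_sinh (t : ℝ) :
    bernoulliGen t = t / 2 * exp (-(t / 2)) / sinh (t / 2) := by
  have hexp : exp t - 1 = exp (t / 2) * (2 * sinh (t / 2)) := by
    rw [sinh_eq, mul_div_cancel₀ _ two_ne_zero, mul_sub, ← exp_add, ← exp_add, add_neg_cancel,
      exp_zero, add_halves]
  rw [bernoulliGen, hexp, exp_neg]
  field

lemma integral_sech_sq_mul_cexp_mul_I_sub_half {t : ℝ} (ht : t ≠ 0) :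
    ∫ w : ℝ, (((1 / cosh (π * w)) ^ 2 : ℝ) : ℂ) *
      Complex.exp (t * (Complex.I * w - 1 / 2)) = ((2 / π * bernoulliGen t : ℝ) : ℂ) := by
  have hsplit (w : ℝ) : (((1 / cosh (π * w)) ^ 2 : ℝ) : ℂ) *
      Complex.exp (t * (Complex.I * w - 1 / 2)) =
      (((1 / cosh (π * w)) ^ 2 : ℝ) : ℂ) * Complex.exp (t * Complex.I * w) *
        (exp (-(t / 2)) : ℝ) := by
    rw [Complex.ofReal_exp, mul_assoc, ← Complex.exp_add]
    push_cast
    ring_nf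
  have hsin : Complex.sin (t * Complex.I / 2) = (sinh (t / 2) : ℝ) * Complex.I := by
    rw [mul_div_right_comm, Complex.sin_mul_I]
    push_cast
    rfl
  simp only [hsplit]
  rw [integral_mul_const, integral_sech_sq_mul_cexp
    (mul_ne_zero (by exact_mod_cast ht) Complex.I_ne_zero) (by simp [pi_pos]), hsin,
    bernoulliGen_eq_div_sinh]
  have hI := Complex.I_ne_zero
  push_cast
  field

end BernoulliGen

section LogDual

variable {x : ℝ}

lemma exp_neg_lt_one (hx : 0 < x) : exp (-x) < 1 := exp_lt_one_iff.2 (neg_lt_zero.2 hx)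

lemma logDual_pos (hx : 0 < x) : 0 < logDual x :=
  neg_pos.2 <| log_neg (sub_pos.2 (exp_neg_lt_one hx)) (sub_lt_self _ (exp_pos _))

lemma logDual_logDual (hx : 0 < x) : logDual (logDual x) = x := by
  unfold logDual
  rw [neg_neg, exp_log (sub_pos.2 (exp_neg_lt_one hx)), sub_sub_cancel, log_exp, neg_neg]

lemma strictAntiOn_logDual : StrictAntiOn logDual (Set.Ioi 0) := fun _ hx _ _ hxy =>
  neg_lt_neg <| log_lt_log (sub_pos.2 (exp_neg_lt_one hx)) <|
    sub_lt_sub_left (exp_lt_exp.2 (neg_lt_neg hxy)) 1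

lemma hasDerivAt_logDual (hx : 0 < x) : HasDerivAt logDual (-(exp x - 1)⁻¹) x := by
  have h : 1 - exp (-x) ≠ 0 := (sub_pos.2 (exp_neg_lt_one hx)).ne'
  refine ((((hasDerivAt_neg x).exp).const_sub 1).log h).neg.congr_deriv ?_
  have hexp : exp x - 1 = (1 - exp (-x)) * exp x := by
    rw [sub_mul, one_mul, ← exp_add, neg_add_cancel, exp_zero]
  rw [hexp, mul_inv, exp_neg]
  ring

lemma image_logDual_Ioi_zero : logDual '' Set.Ioi 0 = Set.Ioi 0 :=
  (Set.image_subset_iff.2 fun _ => logDual_pos).antisymm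
    fun y hy => ⟨logDual y, logDual_pos hy, logDual_logDual hy⟩

lemma image_logDual_Ioi (hx : 0 < x) : logDual '' Set.Ioi x = Set.Ioo 0 (logDual x) := by
  ext y
  constructor
  · rintro ⟨t, ht, rfl⟩
    exact ⟨logDual_pos (hx.trans ht), strictAntiOn_logDual hx (hx.trans ht) ht⟩
  · rintro ⟨hy, hyx⟩
    refine ⟨logDual y, ?_, logDual_logDual hy⟩
    rw [Set.mem_Ioi, ← logDual_logDual hx]
    exact strictAntiOn_logDual hy (logDual_pos hx) hyx

lemma lintegral_Ioi_comp_logDual (g : ℝ → ENNReal) :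
    ∫⁻ x in Set.Ioi 0, ENNReal.ofReal (exp x - 1)⁻¹ * g (logDual x) =
      ∫⁻ y in Set.Ioi 0, g y := by
  simpa only [neg_neg, image_logDual_Ioi_zero] using
    (lintegral_image_eq_lintegral_deriv_mul_of_antitoneOn measurableSet_Ioi
      (fun x hx => (hasDerivAt_logDual hx).hasDerivWithinAt) strictAntiOn_logDual.antitoneOn g).symm

lemma lintegral_Ici_inv_exp_sub_one (hx : 0 < x) :
    ∫⁻ t in Set.Ici x, ENNReal.ofReal (exp t - 1)⁻¹ = ENNReal.ofReal (logDual x) := by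
  have h := lintegral_deriv_eq_volume_image_of_antitoneOn measurableSet_Ioi
    (fun t ht => (hasDerivAt_logDual (hx.trans ht)).hasDerivWithinAt)
    (strictAntiOn_logDual.antitoneOn.mono (Set.Ioi_subset_Ioi hx.le))
  simpa only [neg_neg, image_logDual_Ioi hx, Real.volume_Ioo, sub_zero,
    setLIntegral_congr Ioi_ae_eq_Ici] using h

lemma mellin_logDual {s : ℂ} (hs : 0 < s.re) :
    mellin (fun x => (logDual x : ℂ)) s = Complex.Gamma s * riemannZeta (s + 1) := by
  have hseries (x : ℝ) (hx : x ∈ Set.Ioi 0) :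
      HasSum (fun n : ℕ => (1 / (n + 1) : ℂ) * exp (-(n + 1 : ℝ) * x)) (logDual x) := by
    have h := hasSum_pow_div_log_of_abs_lt_one
      ((abs_of_pos (exp_pos (-x))).trans_lt (exp_neg_lt_one hx))
    refine (Complex.hasSum_ofReal.2 h).congr_fun fun n => ?_
    rw [← exp_nat_mul]
    push_cast
    ring_nf
  have hnorm (n : ℕ) : ‖(1 / (n + 1) : ℂ)‖ / (n + 1 : ℝ) ^ s.re =
      1 / ((n + 1 : ℕ) : ℝ) ^ (s.re + 1) := by
    have hn : (0 : ℝ) < n + 1 := by positivity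
    rw [norm_div, norm_one, ← Nat.cast_add_one, Complex.norm_natCast, Nat.cast_add_one,
      rpow_add_one hn.ne', div_div, mul_comm]
  have hsummable : Summable fun n : ℕ => ‖(1 / (n + 1) : ℂ)‖ / (n + 1 : ℝ) ^ s.re := by
    simp only [hnorm]
    exact (summable_nat_add_iff 1).2 (summable_one_div_nat_rpow.2 (lt_add_of_pos_left 1 hs))
  have h := hasSum_mellin (fun n : ℕ => .inr (by positivity)) hs hseries hsummable
  rw [← h.tsum_eq, zeta_eq_tsum_one_div_nat_add_one_cpow (by simpa using hs), ← tsum_mul_left]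
  refine tsum_congr fun n => ?_
  rw [Complex.cpow_add _ _ (Nat.cast_add_one_ne_zero n), Complex.cpow_one]
  push_cast
  field

lemma integral_Ioi_id_mul_logDual :
    ((∫ x in Set.Ioi 0, x * logDual x : ℝ) : ℂ) = riemannZeta 3 := by
  have h := mellin_logDual (s := 2) (by simp)
  rw [complex_Gamma_two, one_mul, show (2 : ℂ) + 1 = 3 by norm_num] at h
  rw [← h, mellin, ← integral_complex_ofReal]
  norm_num

end LogDual

section Triangle

lemma lintegral_mul_lintegral_Iic_swap {α : Type*} [MeasurableSpace α] [TopologicalSpace α]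
    [LinearOrder α] [OrderClosedTopology α] [SecondCountableTopology α] [OpensMeasurableSpace α]
    {μ ν : Measure α} [SFinite μ] [SFinite ν] {f g : α → ENNReal}
    (hf : Measurable f) (hg : Measurable g) :
    ∫⁻ t, f t * ∫⁻ v in Set.Iic t, g v ∂ν ∂μ = ∫⁻ v, g v * ∫⁻ t in Set.Ici v, f t ∂μ ∂ν := by
  set k : α → α → ENNReal := fun t v =>
    {p : α × α | p.2 ≤ p.1}.indicator (fun p => f p.1 * g p.2) (t, v) with hk
  have hkm : Measurable (Function.uncurry k) :=
    Measurable.indicator (by fun_prop) (measurableSet_le measurable_snd measurable_fst)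
  have hleft (t : α) : f t * ∫⁻ v in Set.Iic t, g v ∂ν = ∫⁻ v, k t v ∂ν := by
    rw [← lintegral_const_mul _ hg, ← lintegral_indicator measurableSet_Iic]
    rfl
  have hright (v : α) : g v * ∫⁻ t in Set.Ici v, f t ∂μ = ∫⁻ t, k t v ∂μ := by
    rw [← lintegral_const_mul _ hf, ← lintegral_indicator measurableSet_Ici]
    simp only [hk, Set.indicator_apply, Set.mem_Ici, Set.mem_ofPred_eq, mul_comm]
  simp only [hleft, hright]
  exact lintegral_lintegral_swap hkm.aemeasurable

lemma ofReal_mul_lintegral_Ioc_comp_mul_right {t : ℝ} (ht : 0 < t) (a b : ℝ) (g : ℝ → ENNReal) :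
    ENNReal.ofReal t * ∫⁻ u in Set.Ioc a b, g (u * t) =
      ∫⁻ v in Set.Ioc (a * t) (b * t), g v := by
  rw [← Set.image_mul_right_Ioc _ _ ht,
    lintegral_image_eq_lintegral_deriv_mul_of_monotoneOn measurableSet_Ioc
      (fun u _ => (hasDerivAt_mul_const t).hasDerivWithinAt)
      ((monotone_mul_right_of_nonneg ht.le).monotoneOn _),
    lintegral_const_mul' _ _ ENNReal.ofReal_ne_top]

end Triangle

section RealIntegral

lemma lintegral_bernoulliGen_mul_bernoulliGen :
    ∫⁻ t in Set.Ioi 0, ∫⁻ u in Set.Ioc 0 1,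
      ENNReal.ofReal (bernoulliGen t * bernoulliGen (u * t)) =
    ∫⁻ v in Set.Ioi 0, ENNReal.ofReal (v * logDual v) := by
  have hinner (t : ℝ) (ht : t ∈ Set.Ioi 0) :
      ∫⁻ u in Set.Ioc 0 1, ENNReal.ofReal (bernoulliGen t * bernoulliGen (u * t)) =
        ENNReal.ofReal (exp t - 1)⁻¹ *
          ∫⁻ v in Set.Iic t, ENNReal.ofReal (bernoulliGen v) ∂volume.restrict (Set.Ioi 0) := by
    have hscale := ofReal_mul_lintegral_Ioc_comp_mul_right ht 0 1
      fun v => ENNReal.ofReal (bernoulliGen v)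
    rw [zero_mul, one_mul] at hscale
    rw [Measure.restrict_restrict measurableSet_Iic, Set.inter_comm, Set.Ioi_inter_Iic, ← hscale,
      ← mul_assoc, mul_comm (ENNReal.ofReal _),
      ← ENNReal.ofReal_mul (le_of_lt ht), ← lintegral_const_mul' _ _ ENNReal.ofReal_ne_top]
    simp only [ENNReal.ofReal_mul (bernoulliGen_nonneg t)]
    rfl
  have htail (v : ℝ) (hv : v ∈ Set.Ioi 0) :
      ENNReal.ofReal (bernoulliGen v) *
        ∫⁻ t in Set.Ici v, ENNReal.ofReal (exp t - 1)⁻¹ ∂volume.restrict (Set.Ioi 0) =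
      ENNReal.ofReal (exp v - 1)⁻¹ * ENNReal.ofReal (logDual v * logDual (logDual v)) := by
    rw [Measure.restrict_restrict_of_subset (Set.Ici_subset_Ioi.2 hv),
      lintegral_Ici_inv_exp_sub_one hv, logDual_logDual hv,
      ← ENNReal.ofReal_mul (bernoulliGen_nonneg v),
      ← ENNReal.ofReal_mul (inv_nonneg.2 (sub_nonneg.2 (one_le_exp (le_of_lt hv)))), bernoulliGen]
    ring_nf
  rw [setLIntegral_congr_fun measurableSet_Ioi hinner,
    lintegral_mul_lintegral_Iic_swap (by fun_prop) (by fun_prop),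
    setLIntegral_congr_fun measurableSet_Ioi htail,
    lintegral_Ioi_comp_logDual fun v => ENNReal.ofReal (v * logDual v)]

/-- The domain of the parameters `(u, t)`, with `t` the variable of the Laplace integral. -/
abbrev halfStrip : Set (ℝ × ℝ) := Set.Ioc 0 1 ×ˢ Set.Ioi 0

lemma measurableSet_halfStrip : MeasurableSet halfStrip := measurableSet_Ioc.prod measurableSet_Ioi

lemma setIntegral_halfStrip_bernoulliGen :
    ∫ p in halfStrip, bernoulliGen p.2 * bernoulliGen (p.1 * p.2) =
      ∫ x in Set.Ioi 0, x * logDual x := by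
  have hmeas : Measurable fun p : ℝ × ℝ => bernoulliGen p.2 * bernoulliGen (p.1 * p.2) := by
    fun_prop
  have hlogDual : Measurable logDual := by unfold logDual; fun_prop
  rw [integral_eq_lintegral_of_nonneg_ae
      (.of_forall fun p => mul_nonneg (bernoulliGen_nonneg _) (bernoulliGen_nonneg _))
      hmeas.aestronglyMeasurable,
    integral_eq_lintegral_of_nonneg_ae
      ((ae_restrict_mem measurableSet_Ioi).mono fun x hx =>
        mul_nonneg (le_of_lt hx) (logDual_pos hx).le)
      (measurable_id'.mul hlogDual).aestronglyMeasurable,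
    ← lintegral_bernoulliGen_mul_bernoulliGen, Measure.volume_eq_prod,
    setLIntegral_prod_symm _ hmeas.ennreal_ofReal.aemeasurable]

end RealIntegral

/-- The weight `sech²(πw₁) sech²(πw₂)`. -/
noncomputable def sechSqWeight (w : ℝ × ℝ) : ℝ :=
  (1 / cosh (π * w.1)) ^ 2 * (1 / cosh (π * w.2)) ^ 2

/-- The denominator `i w₂ - 1/2 + u (i w₁ - 1/2)` of the integrand. -/
noncomputable def sechDenom (w : ℝ × ℝ) (u : ℝ) : ℂ :=
  Complex.I * w.2 - 1 / 2 + (u : ℂ) * (Complex.I * w.1 - 1 / 2)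

/-- The integrand after `-1/D` has been written as `∫₀^∞ exp (t D) dt`, as a function of
`w = (w₁, w₂)` and `p = (u, t)`. -/
noncomputable def laplaceKernel (w p : ℝ × ℝ) : ℂ :=
  sechSqWeight w * Complex.exp (sechDenom w p.1 * p.2)

section LaplaceKernel

lemma integrable_sechSqWeight : Integrable sechSqWeight :=
  integrable_sech_sq.mul_prod integrable_sech_sq

lemma sechSqWeight_nonneg (w : ℝ × ℝ) : 0 ≤ sechSqWeight w := by
  unfold sechSqWeight
  positivity

lemma sechDenom_re (w : ℝ × ℝ) (u : ℝ) : (sechDenom w u).re = -(1 + u) / 2 := by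
  simp only [sechDenom, Complex.add_re, Complex.sub_re, Complex.re_ofReal_mul, Complex.I_mul_re,
    Complex.ofReal_im, Complex.div_ofNat_re, Complex.one_re]
  ring

lemma continuous_laplaceKernel : Continuous (Function.uncurry laplaceKernel) := by
  unfold laplaceKernel sechSqWeight sechDenom Function.uncurry
  fun_prop (disch := exact fun _ => (cosh_pos _).ne')

lemma norm_laplaceKernel_le (w : ℝ × ℝ) {p : ℝ × ℝ} (hp : p ∈ halfStrip) :
    ‖laplaceKernel w p‖ ≤ sechSqWeight w * exp (-(1 / 2) * p.2) := by
  obtain ⟨⟨hu, -⟩, ht⟩ := hp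
  rw [laplaceKernel, norm_mul, Complex.norm_of_nonneg (sechSqWeight_nonneg w), Complex.norm_exp,
    Complex.re_mul_ofReal, sechDenom_re]
  refine mul_le_mul_of_nonneg_left (exp_le_exp.2 ?_) (sechSqWeight_nonneg w)
  exact mul_le_mul_of_nonneg_right (by linarith) (le_of_lt ht)

lemma integrableOn_halfStrip_exp_mul {c : ℝ} (hc : c < 0) :
    IntegrableOn (fun p : ℝ × ℝ => exp (c * p.2)) halfStrip := by
  rw [IntegrableOn, Measure.volume_eq_prod, ← Measure.prod_restrict]
  exact Integrable.comp_snd (integrableOn_exp_mul_Ioi hc 0) _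

lemma integrableOn_laplaceKernel (w : ℝ × ℝ) : IntegrableOn (laplaceKernel w) halfStrip :=
  ((integrableOn_halfStrip_exp_mul (by norm_num)).const_mul (sechSqWeight w)).mono'
    (continuous_laplaceKernel.uncurry_left w).aestronglyMeasurable
    ((ae_restrict_mem measurableSet_halfStrip).mono fun _ => norm_laplaceKernel_le w)

lemma integrable_uncurry_laplaceKernel :
    Integrable (Function.uncurry laplaceKernel) (volume.prod (volume.restrict halfStrip)) :=
  (integrable_sechSqWeight.mul_prod (integrableOn_halfStrip_exp_mul (by norm_num))).mono'
    continuous_laplaceKernel.aestronglyMeasurable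
    ((Measure.quasiMeasurePreserving_snd.ae (ae_restrict_mem measurableSet_halfStrip)).mono
      fun q => norm_laplaceKernel_le q.1)

lemma setIntegral_laplaceKernel (w : ℝ × ℝ) :
    ∫ p in halfStrip, laplaceKernel w p =
      -∫ u in (0 : ℝ)..1, (sechSqWeight w : ℂ) / sechDenom w u := by
  rw [Measure.volume_eq_prod, setIntegral_prod _ (integrableOn_laplaceKernel w),
    intervalIntegral.integral_of_le zero_le_one, ← integral_neg]
  refine setIntegral_congr_fun measurableSet_Ioc fun u hu => ?_
  have hre : (sechDenom w u).re < 0 := by rw [sechDenom_re]; linarith [hu.1]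
  simp only [laplaceKernel]
  rw [integral_const_mul, integral_exp_mul_complex_Ioi hre, Complex.ofReal_zero, mul_zero,
    Complex.exp_zero]
  ring

lemma integral_laplaceKernel {p : ℝ × ℝ} (hp : p ∈ halfStrip) :
    ∫ w, laplaceKernel w p =
      ((4 / π ^ 2 * (bernoulliGen p.2 * bernoulliGen (p.1 * p.2)) : ℝ) : ℂ) := by
  obtain ⟨⟨hu, -⟩, ht⟩ := hp
  have hsplit (w : ℝ × ℝ) : laplaceKernel w p =
      ((((1 / cosh (π * w.1)) ^ 2 : ℝ) : ℂ) *
        Complex.exp ((p.1 * p.2 : ℝ) * (Complex.I * w.1 - 1 / 2))) *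
      ((((1 / cosh (π * w.2)) ^ 2 : ℝ) : ℂ) *
        Complex.exp (p.2 * (Complex.I * w.2 - 1 / 2))) := by
    rw [mul_mul_mul_comm, ← Complex.exp_add, ← Complex.ofReal_mul, laplaceKernel, sechSqWeight,
      sechDenom]
    push_cast
    ring_nf
  simp only [hsplit]
  rw [Measure.volume_eq_prod, integral_prod_mul
    (fun x : ℝ => (((1 / cosh (π * x)) ^ 2 : ℝ) : ℂ) *
      Complex.exp ((p.1 * p.2 : ℝ) * (Complex.I * x - 1 / 2)))
    (fun x : ℝ => (((1 / cosh (π * x)) ^ 2 : ℝ) : ℂ) *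
      Complex.exp (p.2 * (Complex.I * x - 1 / 2))),
    integral_sech_sq_mul_cexp_mul_I_sub_half (mul_pos hu ht).ne',
    integral_sech_sq_mul_cexp_mul_I_sub_half (ne_of_gt ht), ← Complex.ofReal_mul]
  ring_nf

lemma integral_setIntegral_laplaceKernel :
    ∫ w, ∫ p in halfStrip, laplaceKernel w p = 4 / π ^ 2 * riemannZeta 3 := by
  rw [integral_integral_swap integrable_uncurry_laplaceKernel,
    setIntegral_congr_fun measurableSet_halfStrip fun p hp => integral_laplaceKernel hp,
    integral_complex_ofReal, integral_const_mul, setIntegral_halfStrip_bernoulliGen,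
    Complex.ofReal_mul, integral_Ioi_id_mul_logDual]
  push_cast
  rfl

end LaplaceKernel

/-- `ζ(3) = -(π²/4) ∫_{ℝ²} ∫_0^1 sech²(πw₁)sech²(πw₂)/(iw₂ - 1/2 + u(iw₁ - 1/2)) du dw₂ dw₁`,
and the triple integral converges. -/
theorem zeta_three_integral :
    Integrable (fun w : ℝ × ℝ =>
      ∫ u in (0:ℝ)..1,
        (((1 / Real.cosh (π * w.1)) ^ 2 * (1 / Real.cosh (π * w.2)) ^ 2 : ℝ) : ℂ) /
          (Complex.I * w.2 - 1 / 2 + (u : ℂ) * (Complex.I * w.1 - 1 / 2))) volume ∧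
    riemannZeta 3 =
      -((π : ℂ) ^ 2 / 4) * ∫ w : ℝ × ℝ,
        ∫ u in (0:ℝ)..1,
          (((1 / Real.cosh (π * w.1)) ^ 2 * (1 / Real.cosh (π * w.2)) ^ 2 : ℝ) : ℂ) /
            (Complex.I * w.2 - 1 / 2 + (u : ℂ) * (Complex.I * w.1 - 1 / 2)) := by
  change Integrable (fun w => ∫ u in (0 : ℝ)..1, (sechSqWeight w : ℂ) / sechDenom w u) ∧
    riemannZeta 3 = -((π : ℂ) ^ 2 / 4) *
      ∫ w, ∫ u in (0 : ℝ)..1, (sechSqWeight w : ℂ) / sechDenom w u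
  have hlaplace (w : ℝ × ℝ) : ∫ u in (0 : ℝ)..1, (sechSqWeight w : ℂ) / sechDenom w u =
      -∫ p in halfStrip, laplaceKernel w p := by
    rw [setIntegral_laplaceKernel, neg_neg]
  simp only [hlaplace]
  refine ⟨integrable_uncurry_laplaceKernel.integral_prod_left.neg, ?_⟩
  have hπ : (π : ℂ) ≠ 0 := by exact_mod_cast pi_ne_zero
  rw [integral_neg, integral_setIntegral_laplaceKernel]
  field
end
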